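/- arXiv:math/0110223 — 2 statements merged into one kernel-verified Lean document; each statement's English description precedes it below -/
import Mathlib

section
/- Let p be an odd prime, H a Hopf algebra over k of index p such that H* is not unimodular (i.e., the distinguished group-like element g of H satisfies g ≠ 1), and ω ∈ k a primitive p-th root of unity. Then p divides dim H, and for each j ∈ Z_p, the sum over (a,i) ∈ Z_2 × Z_p of dim H^ω_{a,i,j} equals (dim H)/p. -/
open scoped TensorProduct

/-- A group-like element of a coalgebra: a nonzero element `a` with `Δ a = a ⊗ a`. -/
def IsGroupLike (k : Type*) {H : Type*} [CommSemiring k] [AddCommMonoid H] [Module k H]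
    [Coalgebra k H] (a : H) : Prop :=
  a ≠ 0 ∧ Coalgebra.comul (R := k) a = a ⊗ₜ[k] a

/-- The convolution product on the dual of a coalgebra. -/
noncomputable def conv {k H : Type*} [CommSemiring k] [AddCommMonoid H] [Module k H]
    [Coalgebra k H] (f g : Module.Dual k H) : Module.Dual k H :=
  LinearMap.mul' k k ∘ₗ TensorProduct.map f g ∘ₗ Coalgebra.comul

/-- `l ∈ H*` is a right integral of `H*`: `l * β = β(1) • l` for the convolution product. -/
def IsRightIntegralDual (k : Type*) {H : Type*} [CommSemiring k] [Semiring H]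
    [HopfAlgebra k H] (l : Module.Dual k H) : Prop :=
  ∀ f : Module.Dual k H, conv l f = f 1 • l

/-- `Λ ∈ H` is a left integral of `H`: `a * Λ = ε(a) • Λ` for all `a`. -/
def IsLeftIntegral (k : Type*) {H : Type*} [CommSemiring k] [Semiring H]
    [HopfAlgebra k H] (L : H) : Prop :=
  ∀ a : H, a * L = Coalgebra.counit (R := k) a • L

/-- `Λ ∈ H` is a right integral of `H`: `Λ * a = ε(a) • Λ` for all `a`. -/
def IsRightIntegral (k : Type*) {H : Type*} [CommSemiring k] [Semiring H]
    [HopfAlgebra k H] (L : H) : Prop :=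
  ∀ a : H, L * a = Coalgebra.counit (R := k) a • L

/-- `g` is the distinguished group-like element of `H`: it is group-like and
`β * λ = β(g) • λ` for some nonzero right integral `λ` of `H*`. -/
def IsDistinguishedGroupLike (k : Type*) {H : Type*} [CommSemiring k] [Semiring H]
    [HopfAlgebra k H] (g : H) : Prop :=
  IsGroupLike k g ∧ ∃ l : Module.Dual k H, l ≠ 0 ∧ IsRightIntegralDual k l ∧
    ∀ f : Module.Dual k H, conv f l = f g • l

/-- `α` is the distinguished group-like element of `H*`: an algebra map `H → k` with
`Λ * a = α(a) • Λ` for some nonzero left integral `Λ` of `H`. -/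
def IsDistinguishedGroupLikeDual (k : Type*) {H : Type*} [CommSemiring k] [Semiring H]
    [HopfAlgebra k H] (α : H →ₐ[k] k) : Prop :=
  ∃ L : H, L ≠ 0 ∧ IsLeftIntegral k L ∧ ∀ a : H, L * a = α a • L

/-- `IsHopfIndex k g n` : `n` is the index of the Hopf algebra `H` with distinguished
group-like element `g`, i.e. the smallest positive integer `n` with `S ^ (4 n) = id` and
`g ^ n = 1`, where `S` is the antipode. -/
def IsHopfIndex (k : Type*) {H : Type*} [CommSemiring k] [Semiring H] [HopfAlgebra k H]
    (g : H) (n : ℕ) : Prop :=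
  0 < n ∧ (HopfAlgebra.antipode (R := k) (A := H) : Module.End k H) ^ (4 * n) = 1 ∧ g ^ n = 1 ∧
    ∀ m : ℕ, 0 < m → (HopfAlgebra.antipode (R := k) (A := H) : Module.End k H) ^ (4 * m) = 1 →
      g ^ m = 1 → n ≤ m

/-- The simultaneous eigenspace `H^ω_{a,i,j} = {u ∈ H | S² u = (-1)^a ω^i • u, u * g = ω^j • u}`
for `(a,i,j) ∈ ℤ/2 × ℤ/n × ℤ/n`. -/
noncomputable def hopfEigenspace {k H : Type*} [CommRing k] [Ring H] [HopfAlgebra k H]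
    (g : H) (ω : k) {n : ℕ} (t : ZMod 2 × ZMod n × ZMod n) : Submodule k H :=
  Module.End.eigenspace ((HopfAlgebra.antipode (R := k) (A := H) : Module.End k H) ^ 2)
      ((-1 : k) ^ t.1.val * ω ^ t.2.1.val) ⊓
    Module.End.eigenspace (LinearMap.mulRight k g : Module.End k H) (ω ^ t.2.2.val)

/-- Convolution powers of an element of the dual; the zeroth power is the counit,
the unit of the convolution algebra. -/
noncomputable def convPow {k H : Type*} [CommSemiring k] [AddCommMonoid H] [Module k H]
    [Coalgebra k H] (f : Module.Dual k H) : ℕ → Module.Dual k H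
  | 0 => Coalgebra.counit
  | m + 1 => conv f (convPow f m)

/-!
Put `T x = x * g` for a group-like `g` of finite order `n`. The Galois map `a ⊗ b ↦ (a ⊗ 1) Δ(b)`
is bijective and intertwines `id ⊗ T` with `T ⊗ T`. Comparing eigenspaces, the multiplicities `d j`
of the eigenvalues `ω ^ j` of `T` satisfy `∑ a, d a * d (j - a) = (dim H) * d j`. At a `j` where
`d` is maximal this forces `d (j - a) = d j` whenever `d a ≠ 0`; as `1, g, …, g ^ (n - 1)` are
linearly independent, `d a` never vanishes, so `d` is constant. Finally `S²` commutes with `T` and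
satisfies `(S²) ^ (2 * n) = 1`, so it decomposes each eigenspace of `T` according to the
`2n`-th roots of unity `(-1) ^ a * ω ^ i`.
-/

open Module TensorProduct
open scoped Finset

section Counting

variable {ι G : Type*} [Fintype ι] [AddCommGroup G] [DecidableEq G] {c : ι → G}

theorem sum_card_fiber_sub (hc : ∀ x, #{p : ι × ι | c p.1 + c p.2 = x} = #{p : ι × ι | c p.2 = x})
    (x : G) : ∑ i, #{j | c j = x - c i} = ∑ _i : ι, #{j | c j = x} := by
  simpa only [Finset.card_filter, Fintype.sum_prod_type, eq_sub_iff_add_eq'] using hc x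

theorem card_mul_card_fiber_eq_card [Fintype G] (hsurj : Function.Surjective c)
    (hc : ∀ x, #{p : ι × ι | c p.1 + c p.2 = x} = #{p : ι × ι | c p.2 = x}) (x : G) :
    Fintype.card G * #{i | c i = x} = Fintype.card ι := by
  obtain ⟨m, hm⟩ := Finite.exists_max fun x => #{i | c i = x}
  have hconst (y : G) : #{i | c i = y} = #{i | c i = m} := by
    obtain ⟨i, hi⟩ := hsurj (m - y)
    have h := (Finset.sum_eq_sum_iff_of_le fun i _ => hm (m - c i)).mp (sum_card_fiber_sub hc m) i
      (Finset.mem_univ i)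
    rwa [hi, sub_sub_cancel] at h
  calc Fintype.card G * #{i | c i = x} = ∑ y, #{i | c i = y} := by simp [hconst]
    _ = Fintype.card ι := (Finset.card_eq_sum_card_fiberwise fun _ _ => Finset.mem_univ _).symm

end Counting

section Diagonalizable

variable {k V : Type*} [Field k] [AddCommGroup V] [Module k V] {f : End k V}

theorem finrank_eigenspace_eq_card_of_basis {ι : Type*} [Fintype ι] (b : Basis ι k V) {μ : ι → k}
    (hb : ∀ i, f (b i) = μ i • b i) (x : k) [DecidablePred (μ · = x)] :
    finrank k (f.eigenspace x) = #{i | μ i = x} := by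
  have hrepr (v : V) (i : ι) : b.repr (f v) i = μ i * b.repr v i := by
    have : b.coord i ∘ₗ f = μ i • b.coord i := b.ext fun j => by
      by_cases hij : j = i <;> simp [hb, hij]
    exact LinearMap.congr_fun this v
  have hspan : f.eigenspace x = Submodule.span k (Set.range (b ∘ ((↑) : {i // μ i = x} → ι))) := by
    ext v
    rw [End.mem_eigenspace_iff, ← b.repr.injective.eq_iff, Finsupp.ext_iff]
    rw [Set.range_comp, Subtype.range_val_subtype, b.mem_span_image]
    simp [hrepr, Set.subset_def, or_iff_not_imp_right]
  rw [hspan, finrank_span_eq_card (b.linearIndependent.comp _ Subtype.val_injective),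
    Fintype.card_subtype]

variable {σ : Type*} [Fintype σ] {μ : σ → k}

open Polynomial in
theorem iSup_eigenspace_eq_top_of_aeval_nodal_eq_zero [Nonempty σ]
    (hμ : Function.Injective μ) (hf : aeval f (Lagrange.nodal Finset.univ μ) = 0) :
    ⨆ i, f.eigenspace (μ i) = ⊤ := by
  classical
  refine eq_top_iff.mpr fun v _ => ?_
  have hsum : ∑ i, aeval f (Lagrange.basis Finset.univ μ i) v = v := by
    rw [← LinearMap.sum_apply, ← map_sum, Lagrange.sum_basis hμ.injOn Finset.univ_nonempty, map_one,
      End.one_apply]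
  rw [← hsum]
  refine sum_mem fun i _ => Submodule.mem_iSup_of_mem i ?_
  have hker : (X - C (μ i)) * Lagrange.basis Finset.univ μ i =
      C (Lagrange.nodalWeight Finset.univ μ i) * Lagrange.nodal Finset.univ μ := by
    rw [Lagrange.basis_eq_prod_sub_inv_mul_nodal_div (Finset.mem_univ i),
      ← Lagrange.nodal_erase_eq_nodal_div (Finset.mem_univ i),
      Lagrange.nodal_eq_mul_nodal_erase (Finset.mem_univ i), mul_left_comm]
  have h := LinearMap.congr_fun (congrArg (aeval f) hker) v
  rw [End.mem_eigenspace_iff, ← sub_eq_zero]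
  simpa [hf] using h

open Polynomial in
theorem nodal_eq_X_pow_card_sub_one [Nonempty σ] (hμ : Function.Injective μ)
    (hroot : ∀ i, μ i ^ Fintype.card σ = 1) :
    Lagrange.nodal Finset.univ μ = X ^ Fintype.card σ - 1 := by
  have hdeg : (X ^ Fintype.card σ - 1 : k[X]).degree = Fintype.card σ :=
    degree_X_pow_sub_C Fintype.card_pos 1
  refine Polynomial.eq_of_degree_le_of_eval_index_eq Finset.univ hμ.injOn ?_ ?_ ?_ fun i hi => ?_
  · rw [Lagrange.degree_nodal, Finset.card_univ]
  · rw [Lagrange.degree_nodal, Finset.card_univ, hdeg]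
  · rw [Lagrange.nodal_monic.leadingCoeff, leadingCoeff_X_pow_sub_one Fintype.card_pos]
  · simp [Lagrange.eval_nodal_at_node hi, hroot]

theorem isInternal_eigenspace_of_pow_card_eq_one [Nonempty σ] [DecidableEq σ]
    (hf : f ^ Fintype.card σ = 1) (hμ : Function.Injective μ)
    (hroot : ∀ i, μ i ^ Fintype.card σ = 1) :
    DirectSum.IsInternal fun i => f.eigenspace (μ i) := by
  rw [DirectSum.isInternal_submodule_iff_iSupIndep_and_iSup_eq_top]
  refine ⟨f.eigenspaces_iSupIndep.comp hμ, iSup_eigenspace_eq_top_of_aeval_nodal_eq_zero hμ ?_⟩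
  simp [nodal_eq_X_pow_card_sub_one hμ hroot, hf]

variable [FiniteDimensional k V]

theorem sum_finrank_eq_of_isInternal [DecidableEq σ] {N : σ → Submodule k V}
    (hN : DirectSum.IsInternal N) : ∑ i, finrank k (N i) = finrank k V := by
  rw [← finrank_directSum]
  exact (LinearEquiv.ofBijective (DirectSum.coeLinearMap N) hN).finrank_eq

theorem sum_finrank_eigenspace_inf_of_pow_card_eq_one [Nonempty σ]
    (hf : f ^ Fintype.card σ = 1) (hμ : Function.Injective μ)
    (hroot : ∀ i, μ i ^ Fintype.card σ = 1) {E : Submodule k V} (hE : ∀ x ∈ E, f x ∈ E) :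
    ∑ i, finrank k ↥(f.eigenspace (μ i) ⊓ E) = finrank k E := by
  classical
  have hpow : f.restrict hE ^ Fintype.card σ = 1 := by
    rw [End.pow_restrict]
    ext x
    simp [LinearMap.coe_restrict_apply, hf]
  rw [← sum_finrank_eq_of_isInternal (isInternal_eigenspace_of_pow_card_eq_one hpow hμ hroot)]
  refine Finset.sum_congr rfl fun i _ => ?_
  rw [inf_comm, Submodule.inf_genEigenspace _ _ hE]
  exact Submodule.finrank_map_subtype_eq _ _

end Diagonalizable

section RootsOfUnity

variable {k : Type*} [CommRing k] {n : ℕ} {ω : k}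

theorem neg_one_pow_mul_pow_pow (hn : Odd n) (hω : IsPrimitiveRoot ω n) (a i : ℕ) :
    ((-1 : k) ^ a * ω ^ i) ^ n = (-1) ^ a := by
  rw [mul_pow, pow_right_comm, hn.neg_one_pow, pow_right_comm, hω.pow_eq_one, one_pow, mul_one]

theorem neg_one_pow_mul_pow_pow_two_mul (hn : Odd n) (hω : IsPrimitiveRoot ω n) (a i : ℕ) :
    ((-1 : k) ^ a * ω ^ i) ^ (2 * n) = 1 := by
  rw [pow_mul', neg_one_pow_mul_pow_pow hn hω, pow_right_comm, neg_one_sq, one_pow]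

theorem injective_pow_zmod_val {M : Type*} [CommMonoid M] [NeZero n] {ζ : M}
    (hζ : IsPrimitiveRoot ζ n) : Function.Injective fun i : ZMod n => ζ ^ i.val :=
  fun i j h => ZMod.val_injective n (hζ.pow_inj i.val_lt j.val_lt h)

theorem injective_neg_one_pow_mul_pow_zmod_val [IsDomain k] [NeZero (2 : k)] [NeZero n]
    (hn : Odd n) (hω : IsPrimitiveRoot ω n) :
    Function.Injective fun t : ZMod 2 × ZMod n => (-1 : k) ^ t.1.val * ω ^ t.2.val := by
  rintro ⟨a, i⟩ ⟨b, j⟩ h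
  have hneg : IsPrimitiveRoot (-1 : k) 2 := by
    refine IsPrimitiveRoot.mk_of_lt _ two_pos (by simp) fun l hl hl2 => ?_
    obtain rfl : l = 1 := by omega
    rw [pow_one, Ne, neg_eq_iff_add_eq_zero, one_add_one_eq_two]
    exact two_ne_zero
  have hab : a = b := injective_pow_zmod_val hneg <| by
    simpa only [neg_one_pow_mul_pow_pow hn hω] using congrArg (· ^ n) h
  subst hab
  have hij : i = j := injective_pow_zmod_val hω <|
    mul_left_cancel₀ (pow_ne_zero a.val (neg_ne_zero.mpr one_ne_zero)) h
  rw [hij]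

end RootsOfUnity

section GaloisMap

open Coalgebra HopfAlgebra LinearMap WithConv

section Twisted

variable {R A C : Type*} [CommSemiring R] [Semiring A] [Algebra R A] [AddCommMonoid C] [Module R C]
  [Coalgebra R C]

/-- The Galois map twisted by `f : C → A`, namely `a ⊗ c ↦ ∑ a f(c₁) ⊗ c₂`. For `f = id` it is the
Galois map of a bialgebra; the parameter makes the inverse of the latter another instance. -/
noncomputable def galoisMap (f : C →ₗ[R] A) : A ⊗[R] C →ₗ[R] A ⊗[R] C :=
  (mul' R A).rTensor C ∘ₗ (TensorProduct.assoc R A A C).symm.toLinearMap ∘ₗ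
    (f.rTensor C ∘ₗ comul).lTensor A

theorem galoisMap_tmul {ι : Type*} (f : C →ₗ[R] A) (a : A) {c : C} (r : Repr R c ι) :
    galoisMap f (a ⊗ₜ c) = ∑ i ∈ r.index, (a * f (r.left i)) ⊗ₜ[R] r.right i := by
  simp [galoisMap, ← r.eq, tmul_sum]

theorem galoisMap_one : galoisMap (1 : WithConv (C →ₗ[R] A)).ofConv = LinearMap.id := by
  refine TensorProduct.ext' fun a c => ?_
  have h := congrArg ((toSpanSingleton R A a).rTensor C) (sum_counit_tmul_eq (ℛ R c))
  simp only [map_sum, rTensor_tmul, toSpanSingleton_apply, one_smul] at h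
  simpa [galoisMap_tmul _ _ (ℛ R c), LinearMap.convOne_def, ← Algebra.commutes,
    ← Algebra.smul_def] using h

theorem galoisMap_comp (f g : C →ₗ[R] A) :
    galoisMap f ∘ₗ galoisMap g = galoisMap (toConv g * toConv f).ofConv := by
  refine TensorProduct.ext' fun a c => ?_
  have h := congrArg ((mulLeft R a ∘ₗ mul' R A ∘ₗ TensorProduct.map g f).rTensor C ∘ₗ
    (TensorProduct.assoc R C C C).symm.toLinearMap)
    (sum_tmul_tmul_eq (ℛ R c) (fun i => ℛ R ((ℛ R c).left i)) fun i => ℛ R ((ℛ R c).right i))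
  simp only [coe_comp, LinearEquiv.coe_coe, Function.comp_apply, map_sum, assoc_symm_tmul,
    rTensor_tmul, map_tmul, mul'_apply, mulLeft_apply] at h
  rw [galoisMap_tmul _ _ (ℛ R c), comp_apply, galoisMap_tmul _ _ (ℛ R c), map_sum]
  simp only [galoisMap_tmul f _ (ℛ R ((ℛ R c).right _)), Finset.mul_sum, sum_tmul,
    (ℛ R ((ℛ R c).left _)).convMul_apply]
  simpa only [mul_assoc] using h.symm

end Twisted

variable {R H : Type*} [CommSemiring R] [Semiring H]

variable (R H) in
/-- The Galois map `a ⊗ b ↦ (a ⊗ 1) Δ(b)` of a Hopf algebra, as an equivalence. -/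
noncomputable def galoisEquiv [HopfAlgebra R H] : H ⊗[R] H ≃ₗ[R] H ⊗[R] H :=
  .ofLinearMap (galoisMap LinearMap.id) (galoisMap (antipode R))
    (by rw [galoisMap_comp, antipode_mul_id, galoisMap_one])
    (by rw [galoisMap_comp, id_mul_antipode, galoisMap_one])

theorem galoisMap_id_tmul [Bialgebra R H] (a b : H) :
    galoisMap LinearMap.id (a ⊗ₜ b) = (a ⊗ₜ[R] 1) * comul b := by
  rw [galoisMap_tmul _ _ (ℛ R b)]
  simp [← (ℛ R b).eq, Finset.mul_sum]

theorem map_mulRight_mulRight [Algebra R H] (g h : H) :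
    TensorProduct.map (mulRight R g) (mulRight R h) = mulRight R (g ⊗ₜ[R] h) :=
  TensorProduct.ext' fun _ _ => by simp

theorem map_mulRight_galoisEquiv_tmul [HopfAlgebra R H] {g : H} (hg : IsGroupLikeElem R g)
    (a b : H) :
    TensorProduct.map (mulRight R g) (mulRight R g) (galoisEquiv R H (a ⊗ₜ b)) =
      galoisEquiv R H (a ⊗ₜ (b * g)) := by
  simp [galoisEquiv, galoisMap_id_tmul, map_mulRight_mulRight, Bialgebra.comul_mul,
    hg.comul_eq_tmul_self, mul_assoc]

end GaloisMap

section GroupLike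

theorem IsGroupLike.isGroupLikeElem {k C : Type*} [Field k] [AddCommGroup C] [Module k C]
    [Coalgebra k C] {g : C} (hg : IsGroupLike k g) : IsGroupLikeElem k g := by
  refine ⟨smul_left_injective k hg.1 ?_, hg.2⟩
  have h := Coalgebra.rTensor_counit_comul (R := k) g
  rw [hg.2, LinearMap.rTensor_tmul] at h
  simpa using congrArg (TensorProduct.lid k C) h

theorem commute_antipode_sq_mulRight {R H : Type*} [CommSemiring R] [Semiring H] [HopfAlgebra R H]
    {g : H} (hg : IsGroupLikeElem R g) :
    Commute ((HopfAlgebra.antipode R (A := H) : End R H) ^ 2) (LinearMap.mulRight R g) := by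
  ext u
  simp [pow_two, HopfAlgebra.antipode_mul_antidistrib, hg.antipode_antipode]

theorem linearIndependent_pow_of_isGroupLikeElem {R H : Type*} [CommRing R] [IsDomain R] [Ring H]
    [Bialgebra R H] [IsTorsionFree R H] {g : H} (hg : IsGroupLikeElem R g) :
    LinearIndependent R fun i : Fin (orderOf g) => g ^ i.val :=
  linearIndepOn_isGroupLikeElem.linearIndependent.comp
    (fun i : Fin (orderOf g) => ⟨g ^ i.val, hg.pow⟩) fun i j h =>
      Fin.ext (pow_injOn_Iio_orderOf i.2 j.2 (congrArg Subtype.val h))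

open Polynomial in
theorem minpoly_mulRight_of_isGroupLikeElem {k H : Type*} [Field k] [Ring H] [Bialgebra k H] {g : H}
    (hg : IsGroupLikeElem k g) (hfin : IsOfFinOrder g) :
    minpoly k (LinearMap.mulRight k g) = X ^ orderOf g - 1 := by
  refine minpoly.eq_of_linearIndependent _ _ (monic_X_pow_sub_C 1 hfin.orderOf_pos.ne') ?_
    (orderOf g) (degree_X_pow_sub_C hfin.orderOf_pos 1) ?_
  · rw [map_sub, map_pow, aeval_X, map_one, LinearMap.pow_mulRight, pow_orderOf_eq_one,
      LinearMap.mulRight_one, ← End.one_eq_id, sub_self]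
  · refine .of_comp (LinearMap.applyₗ (1 : H)) ?_
    simpa [Function.comp_def, LinearMap.pow_mulRight] using
      linearIndependent_pow_of_isGroupLikeElem hg

end GroupLike

section Multiplicities

variable {k H : Type*} [Field k] [Ring H] [HopfAlgebra k H] {g : H}

theorem card_add_eq_card_snd_of_eigenbasis {ι G : Type*} [Fintype ι] [AddCommGroup G]
    [DecidableEq G] (hg : IsGroupLikeElem k g) {χ : AddChar G k} (hχ : Function.Injective χ)
    (b : Basis ι k H) {c : ι → G} (hb : ∀ i, b i * g = χ (c i) • b i) (x : G) :
    #{p : ι × ι | c p.1 + c p.2 = x} = #{p : ι × ι | c p.2 = x} := by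
  classical
  let T := TensorProduct.map (LinearMap.mulRight k g) (LinearMap.mulRight k g)
  have hprod : ∀ p, T (b.tensorProduct b p) = χ (c p.1 + c p.2) • b.tensorProduct b p := by
    rintro ⟨i, j⟩
    simp [T, hb, AddChar.map_add_eq_mul, mul_comm, smul_tmul', smul_smul]
  have hgalois : ∀ p, T ((b.tensorProduct b).map (galoisEquiv k H) p) =
      χ (c p.2) • (b.tensorProduct b).map (galoisEquiv k H) p := by
    rintro ⟨i, j⟩
    simp [T, map_mulRight_galoisEquiv_tmul hg, hb]
  simpa [hχ.eq_iff] using (finrank_eigenspace_eq_card_of_basis _ hprod (χ x)).symm.trans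
    (finrank_eigenspace_eq_card_of_basis _ hgalois (χ x))

variable [FiniteDimensional k H] {n : ℕ} [NeZero n] {ω : k}

theorem mul_finrank_eigenspace_mulRight (hg : IsGroupLikeElem k g) (hgn : orderOf g = n)
    (hω : IsPrimitiveRoot ω n) (j : ZMod n) :
    n * finrank k (End.eigenspace (LinearMap.mulRight k g : End k H) (ω ^ j.val)) =
      finrank k H := by
  set T : End k H := LinearMap.mulRight k g
  have hmin : minpoly k T = .X ^ n - 1 := hgn ▸ minpoly_mulRight_of_isGroupLikeElem hg
    (orderOf_pos_iff.mp (hgn ▸ NeZero.pos n))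
  have hTn : T ^ n = 1 := by simpa [hmin, sub_eq_zero] using minpoly.aeval k T
  have hroot (i : ZMod n) : (ω ^ i.val) ^ n = 1 := by
    rw [pow_right_comm, hω.pow_eq_one, one_pow]
  have hint : DirectSum.IsInternal fun i : ZMod n => T.eigenspace (ω ^ i.val) :=
    isInternal_eigenspace_of_pow_card_eq_one (by rwa [ZMod.card]) (injective_pow_zmod_val hω)
      (by simpa only [ZMod.card] using hroot)
  let b := hint.collectedBasis fun i => finBasis k (T.eigenspace (ω ^ i.val))
  have hb (i) : T (b i) = ω ^ i.1.val • b i :=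
    End.mem_eigenspace_iff.mp (hint.collectedBasis_mem _ i)
  have hpos (i : ZMod n) : 0 < finrank k (T.eigenspace (ω ^ i.val)) := by
    have hev : T.HasEigenvalue (ω ^ i.val) := End.hasEigenvalue_of_isRoot (by simp [hmin, hroot])
    exact Nat.pos_of_ne_zero fun h => hev (Submodule.finrank_eq_zero.mp h)
  have hsurj : Function.Surjective
      (Sigma.fst : (Σ i : ZMod n, Fin (finrank k (T.eigenspace (ω ^ i.val)))) → ZMod n) :=
    fun i => ⟨⟨i, 0, hpos i⟩, rfl⟩
  have hcard := card_mul_card_fiber_eq_card hsurj (card_add_eq_card_snd_of_eigenbasis hg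
    (χ := AddChar.zmodChar n hω.pow_eq_one) (injective_pow_zmod_val hω) b hb) j
  classical
  rw [finrank_eigenspace_eq_card_of_basis b hb, finrank_eq_card_basis b, ← hcard, ZMod.card]
  simp [(injective_pow_zmod_val hω).eq_iff]

theorem sum_finrank_hopfEigenspace [NeZero (2 : k)] (hn : Odd n) (hg : IsGroupLikeElem k g)
    (hS : (HopfAlgebra.antipode k (A := H) : End k H) ^ (4 * n) = 1) (hω : IsPrimitiveRoot ω n)
    (j : ZMod n) :
    ∑ t : ZMod 2 × ZMod n, finrank k (hopfEigenspace g ω (t.1, t.2, j)) =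
      finrank k (End.eigenspace (LinearMap.mulRight k g : End k H) (ω ^ j.val)) := by
  have hcard : Fintype.card (ZMod 2 × ZMod n) = 2 * n := by simp [ZMod.card]
  have hpow : ((HopfAlgebra.antipode k (A := H) : End k H) ^ 2) ^ Fintype.card (ZMod 2 × ZMod n) =
      1 := by
    simpa only [hcard, ← pow_mul, ← mul_assoc, Nat.reduceMul] using hS
  have hinv : ∀ x ∈ End.eigenspace (LinearMap.mulRight k g : End k H) (ω ^ j.val),
      ((HopfAlgebra.antipode k (A := H) : End k H) ^ 2) x ∈
        End.eigenspace (LinearMap.mulRight k g : End k H) (ω ^ j.val) :=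
    End.mapsTo_genEigenspace_of_comm (commute_antipode_sq_mulRight hg).symm _ _
  simp only [hopfEigenspace]
  exact sum_finrank_eigenspace_inf_of_pow_card_eq_one hpow
    (injective_neg_one_pow_mul_pow_zmod_val hn hω)
    (fun t => hcard ▸ neg_one_pow_mul_pow_pow_two_mul hn hω _ _) hinv

end Multiplicities

theorem stmt8_general {k : Type*} [Field k] [NeZero (2 : k)] {n : ℕ} [NeZero n] (hn : Odd n)
    {H : Type*} [Ring H] [HopfAlgebra k H] [FiniteDimensional k H] {g : H} (hg : IsGroupLike k g)
    (hgn : orderOf g = n) (hS : (HopfAlgebra.antipode k (A := H) : End k H) ^ (4 * n) = 1) {ω : k}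
    (hω : IsPrimitiveRoot ω n) :
    n ∣ finrank k H ∧
      ∀ j : ZMod n, ∑ t : ZMod 2 × ZMod n, finrank k (hopfEigenspace g ω (t.1, t.2, j)) =
        finrank k H / n := by
  have hdim := mul_finrank_eigenspace_mulRight hg.isGroupLikeElem hgn hω
  refine ⟨⟨_, (hdim 0).symm⟩, fun j => ?_⟩
  rw [sum_finrank_hopfEigenspace hn hg.isGroupLikeElem hS hω, ← hdim j,
    Nat.mul_div_cancel_left _ (NeZero.pos n)]

/-- Lemma 5.6. Let `p` be an odd prime, `H` a Hopf algebra of index `p` over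
an algebraically closed field of characteristic `0` such that `H*` is not unimodular (i.e. the
distinguished group-like element `g ≠ 1`), and `ω` a primitive `p`-th root of unity. Then
`p ∣ dim H` and, for each `j ∈ ℤ/p`, `∑_{(a,i) ∈ ℤ/2 × ℤ/p} dim H^ω_{a,i,j} = dim H / p`. -/
theorem stmt8 (k : Type*) [Field k] [IsAlgClosed k] [CharZero k]
    (p : ℕ) (hp : p.Prime) (hpodd : Odd p) [NeZero p]
    (H : Type*) [Ring H] [HopfAlgebra k H] [FiniteDimensional k H]
    (g : H) (hg : IsDistinguishedGroupLike k g) (hg1 : g ≠ 1) (hidx : IsHopfIndex k g p)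
    (ω : k) (hω : IsPrimitiveRoot ω p) :
    p ∣ Module.finrank k H ∧
      ∀ j : ZMod p,
        ∑ t : ZMod 2 × ZMod p, Module.finrank k (hopfEigenspace g ω (t.1, t.2, j)) =
          Module.finrank k H / p := by
  have := Fact.mk hp
  exact stmt8_general hpodd hg.1 (orderOf_eq_prime hidx.2.2.1 hg1) hidx.2.1 hω
end

section
/- Let p be an odd prime, H a Hopf algebra over k of index p such that H is unimodular and H* is not unimodular, and ω ∈ k a primitive p-th root of unity. Then there exists a single integer d such that dim H^ω_{0,i,j} − dim H^ω_{1,i,j} = d for all i, j ∈ Z_p. -/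
open scoped TensorProduct

/-!
Let `l` be a nonzero right integral of `H*` and `Λ` a nonzero two-sided integral of `H`, so that
`l(Λ) ≠ 0`, and let `d i j` be the signed dimension in question. Radford's trace formula
`l(Λ) Tr(b ↦ S²(b) y) = ε(Λ) l(y)` and the vanishing of `l` on group-like elements (as `g ≠ 1`)
give `Tr(b ↦ S²(b) gᵐ) = 0` for all `m`. Restricting to the `ω^j`-eigenspace of right
multiplication by `g`, this reads `∑ i, d i j ω^i = 0`; as the minimal polynomial of `ω` is
`1 + X + ⋯ + X^(p-1)`, `d i j` does not depend on `i`. On the other hand Radford's formula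
`S⁴(b) g = g b` shows that `S` maps `H^ω_{a,i,j}` onto `H^ω_{a,i,-2i-j}`, so that
`d i j = d i (-2i-j)`. Choosing `i` with `2i = -j` gives `d i j = d i 0`.
-/

open Coalgebra HopfAlgebra Module Polynomial

section SimultaneousEigenspaces

lemma commute_aeval_right {R A : Type*} [CommSemiring R] [Semiring A] [Algebra R A] {a b : A}
    (h : Commute a b) (P : R[X]) : Commute a (aeval b P) :=
  Algebra.commute_of_mem_adjoin_singleton_of_commute (aeval_mem_adjoin_singleton R b) h

variable {k V ι κ : Type*} [Field k] [AddCommGroup V] [Module k V] [Fintype ι] [Fintype κ]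

lemma nodal_univ_eq_X_pow_card_sub_one [Nonempty ι] {μ : ι → k} (hμ : Function.Injective μ)
    (hroot : ∀ i, μ i ^ Fintype.card ι = 1) :
    Lagrange.nodal Finset.univ μ = X ^ Fintype.card ι - 1 := by
  have hcard : 0 < Fintype.card ι := Fintype.card_pos
  refine eq_of_degree_sub_lt_of_eval_index_eq Finset.univ hμ.injOn ?_ fun i _ ↦ ?_
  · rw [← C_1]
    refine (degree_sub_lt_left ?_ Lagrange.nodal_ne_zero ?_).trans_eq Lagrange.degree_nodal
    · rw [Lagrange.degree_nodal, degree_X_pow_sub_C hcard, Finset.card_univ]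
    · rw [Lagrange.nodal_monic, (monic_X_pow_sub_C 1 hcard.ne').leadingCoeff]
  · simp [Lagrange.eval_nodal_at_node, hroot]

lemma aeval_nodal_univ_eq_zero [Nonempty ι] {T : End k V} {μ : ι → k}
    (hμ : Function.Injective μ) (hroot : ∀ i, μ i ^ Fintype.card ι = 1)
    (hT : T ^ Fintype.card ι = 1) : aeval T (Lagrange.nodal Finset.univ μ) = 0 := by
  simp [nodal_univ_eq_X_pow_card_sub_one hμ hroot, hT]

lemma isProj_inf_mul_of_commute {p q : Submodule k V} {P Q : End k V}
    (hP : LinearMap.IsProj p P) (hQ : LinearMap.IsProj q Q) (h : Commute P Q) :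
    LinearMap.IsProj (p ⊓ q) (P * Q) where
  map_mem v := ⟨hP.map_mem _, h.eq ▸ hQ.map_mem _⟩
  map_id v hv := by rw [End.mul_apply, hQ.map_id v hv.2, hP.map_id v hv.1]

section DecidableEq

variable [DecidableEq ι]

lemma mul_aeval_basis {T : End k V} {μ : ι → k}
    (hT : aeval T (Lagrange.nodal Finset.univ μ) = 0) (i : ι) :
    T * aeval T (Lagrange.basis Finset.univ μ i) =
      μ i • aeval T (Lagrange.basis Finset.univ μ i) := by
  have hdvd : Lagrange.nodal Finset.univ μ ∣
      (X - C (μ i)) * Lagrange.basis Finset.univ μ i := by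
    rw [Lagrange.basis_eq_prod_sub_inv_mul_nodal_div (Finset.mem_univ i), mul_left_comm,
      ← Lagrange.nodal_erase_eq_nodal_div (Finset.mem_univ i),
      ← Lagrange.nodal_eq_mul_nodal_erase (Finset.mem_univ i)]
    exact dvd_mul_left _ _
  have hker := aeval_eq_zero_of_dvd_aeval_eq_zero hdvd hT
  simpa [sub_mul, sub_eq_zero, Algebra.algebraMap_eq_smul_one] using hker

lemma isProj_aeval_basis {T : End k V} {μ : ι → k} (hμ : Function.Injective μ)
    (hT : aeval T (Lagrange.nodal Finset.univ μ) = 0) (i : ι) :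
    LinearMap.IsProj (T.eigenspace (μ i)) (aeval T (Lagrange.basis Finset.univ μ i)) where
  map_mem v := End.mem_eigenspace_iff.2 congr($(mul_aeval_basis hT i) v)
  map_id v hv := by
    rw [End.aeval_apply_of_mem_apply_eq_smul (End.mem_eigenspace_iff.1 hv),
      Lagrange.eval_basis_self hμ.injOn (Finset.mem_univ i), one_smul]

end DecidableEq

lemma trace_mul_eq_sum_finrank_eigenspace_inf [FiniteDimensional k V] [Nonempty ι] {T : End k V}
    {μ : ι → k} (hμ : Function.Injective μ) (hT : aeval T (Lagrange.nodal Finset.univ μ) = 0)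
    {q : Submodule k V} {Q : End k V} (hQ : LinearMap.IsProj q Q) (hTQ : Commute T Q) :
    LinearMap.trace k V (T * Q) = ∑ i, (finrank k ↥(T.eigenspace (μ i) ⊓ q) : k) * μ i := by
  classical
  have hproj (i : ι) := isProj_inf_mul_of_commute (isProj_aeval_basis hμ hT i) hQ
    (commute_aeval_right hTQ.symm _).symm
  calc LinearMap.trace k V (T * Q)
    _ = LinearMap.trace k V
          (T * aeval T (∑ i, Lagrange.basis Finset.univ μ i) * Q) := by
        rw [Lagrange.sum_basis hμ.injOn Finset.univ_nonempty, map_one, mul_one]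
    _ = ∑ i, μ i * LinearMap.trace k V (aeval T (Lagrange.basis Finset.univ μ i) * Q) := by
        simp only [map_sum, Finset.mul_sum, Finset.sum_mul, mul_aeval_basis hT, smul_mul_assoc,
          map_smul, smul_eq_mul]
    _ = ∑ i, (finrank k ↥(T.eigenspace (μ i) ⊓ q) : k) * μ i :=
        Finset.sum_congr rfl fun i _ ↦ by rw [(hproj i).trace, mul_comm]

lemma sum_finrank_eigenspace_inf_mul_eq_zero [FiniteDimensional k V] [Nonempty ι]
    {A B : End k V} (hAB : Commute A B) (htr : ∀ n : ℕ, LinearMap.trace k V (A * B ^ n) = 0)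
    {μ : ι → k} (hμ : Function.Injective μ) (hA : aeval A (Lagrange.nodal Finset.univ μ) = 0)
    {ν : κ → k} (hν : Function.Injective ν) (hB : aeval B (Lagrange.nodal Finset.univ ν) = 0)
    (j : κ) :
    ∑ i, (finrank k ↥(A.eigenspace (μ i) ⊓ B.eigenspace (ν j)) : k) * μ i = 0 := by
  classical
  have htr_aeval (P : k[X]) : LinearMap.trace k V (A * aeval B P) = 0 := by
    simp only [aeval_eq_sum_range, Finset.mul_sum, mul_smul_comm, map_sum, map_smul, htr,
      smul_zero, Finset.sum_const_zero]
  rw [← trace_mul_eq_sum_finrank_eigenspace_inf hμ hA (isProj_aeval_basis hν hB j)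
    (commute_aeval_right hAB _), htr_aeval]

end SimultaneousEigenspaces

section RootsOfUnity

variable {K : Type*} [Field K] {n : ℕ} {ω : K}

lemma eq_of_sum_intCast_mul_pow_eq_zero [CharZero K] {p : ℕ} [Fact p.Prime]
    (hω : IsPrimitiveRoot ω p) {a : ZMod p → ℤ} (h : ∑ i, (a i : K) * ω ^ i.val = 0)
    (i j : ZMod p) : a i = a j := by
  let P : ℤ[X] := ∑ i : ZMod p, C (a i) * X ^ i.val
  have hroot : aeval ω P = 0 := by simpa [P] using h
  have hcoeff (i : ZMod p) : P.coeff i.val = a i := by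
    simp [P, coeff_X_pow, (ZMod.val_injective p).eq_iff]
  have hdvd : cyclotomic p ℤ ∣ P := by
    rw [cyclotomic_eq_minpoly hω (NeZero.pos p)]
    exact minpoly.isIntegrallyClosed_dvd (hω.isIntegral (NeZero.pos p)) hroot
  have hcyc (i : ZMod p) : (cyclotomic p ℤ).coeff i.val = 1 := by
    simp [cyclotomic_prime, coeff_X_pow, i.val_lt]
  have hdeg : P.natDegree ≤ (cyclotomic p ℤ).natDegree := by
    rw [natDegree_cyclotomic, Nat.totient_prime Fact.out]
    refine natDegree_sum_le_of_forall_le _ _ fun i _ ↦ (natDegree_C_mul_X_pow_le _ _).trans ?_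
    exact Nat.le_sub_one_of_lt i.val_lt
  have hP := eq_leadingCoeff_mul_of_monic_of_dvd_of_natDegree_le (cyclotomic.monic p ℤ) hdvd hdeg
  rw [← hcoeff i, ← hcoeff j, hP, coeff_C_mul, coeff_C_mul, hcyc, hcyc]

lemma injective_pow_val {M : Type*} [CommMonoid M] [NeZero n] {ζ : M}
    (hζ : IsPrimitiveRoot ζ n) :
    Function.Injective fun i : ZMod n ↦ ζ ^ i.val := fun i j h ↦
  ZMod.val_injective n (hζ.pow_inj i.val_lt j.val_lt h)

lemma injective_neg_one_pow_val_mul_pow_val [CharZero K] [NeZero n] (hn : Odd n)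
    (hω : IsPrimitiveRoot ω n) :
    Function.Injective fun t : ZMod 2 × ZMod n ↦ (-1 : K) ^ t.1.val * ω ^ t.2.val := by
  rintro ⟨a, i⟩ ⟨b, j⟩ h
  have hpow (a : ZMod 2) (i : ZMod n) :
      ((-1 : K) ^ a.val * ω ^ i.val) ^ n = (-1) ^ a.val := by
    rw [mul_pow, pow_right_comm, hn.neg_one_pow, pow_right_comm, hω.pow_eq_one, one_pow, mul_one]
  have hsign : (-1 : K) ^ a.val = (-1) ^ b.val := by
    rw [← hpow a i, ← hpow b j]
    exact congr($h ^ n)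
  have hab : a = b :=
    injective_pow_val (IsPrimitiveRoot.neg_one 0 (NeZero.ne' 2)) hsign
  subst hab
  exact congrArg (Prod.mk a) (injective_pow_val hω (mul_left_cancel₀ (by simp) h))

lemma neg_one_pow_mul_pow_pow_two_mul_s9 {R : Type*} [CommRing R] {ζ : R} (hζ : ζ ^ n = 1)
    (a b : ℕ) : ((-1) ^ a * ζ ^ b) ^ (2 * n) = 1 := by
  rw [mul_pow, pow_right_comm, pow_mul, neg_one_sq, one_pow, one_pow, pow_right_comm,
    pow_mul', hζ, one_pow, one_pow, one_mul]

end RootsOfUnity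

section Slices

variable {k H : Type*} [CommSemiring k] [Semiring H] [Algebra k H]

/-- The slice map `l ⊗ id : H ⊗ H → H` of a linear form, so that `l(x₁) x₂` is the left slice
of `Δ x`. -/
noncomputable def leftSlice (l : Dual k H) : H ⊗[k] H →ₗ[k] H :=
  TensorProduct.lid k H ∘ₗ l.rTensor H

/-- The slice map `id ⊗ l : H ⊗ H → H` of a linear form, so that `x₁ l(x₂)` is the right slice
of `Δ x`. -/
noncomputable def rightSlice (l : Dual k H) : H ⊗[k] H →ₗ[k] H :=
  TensorProduct.rid k H ∘ₗ l.lTensor H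

@[simp]
lemma leftSlice_tmul (l : Dual k H) (x y : H) : leftSlice l (x ⊗ₜ y) = l x • y := by
  simp [leftSlice]

@[simp]
lemma rightSlice_tmul (l : Dual k H) (x y : H) : rightSlice l (x ⊗ₜ y) = l y • x := by
  simp [rightSlice]

lemma leftSlice_mul_one_tmul (l : Dual k H) (X : H ⊗[k] H) (c : H) :
    leftSlice l (X * (1 ⊗ₜ c)) = leftSlice l X * c := by
  induction X with
  | zero => simp
  | tmul x y => simp
  | add X Y hX hY => simp only [add_mul, map_add, hX, hY]

lemma rightSlice_tmul_one_mul (l : Dual k H) (X : H ⊗[k] H) (c : H) :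
    rightSlice l ((c ⊗ₜ 1) * X) = c * rightSlice l X := by
  induction X with
  | zero => simp
  | tmul x y => simp
  | add X Y hX hY => simp only [mul_add, map_add, hX, hY]

lemma apply_mul_leftSlice_mul_tmul_one (l h : Dual k H) (X : H ⊗[k] H) (a b : H) :
    h (a * leftSlice l (X * (b ⊗ₜ 1))) = l (rightSlice h ((1 ⊗ₜ a) * X) * b) := by
  induction X with
  | zero => simp
  | tmul x y => simp [mul_comm]
  | add X Y hX hY => simp only [add_mul, mul_add, map_add, hX, hY]

end Slices

section Comultiplication

variable {k H : Type*} [CommSemiring k] [Semiring H] [HopfAlgebra k H]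

open LinearMap WithConv Algebra.TensorProduct

lemma toConv_comul_eq :
    toConv (comul : H →ₗ[k] H ⊗[k] H) =
      toConv (includeLeft (R := k) (S := k) (A := H) (B := H)).toLinearMap *
        toConv (includeRight (R := k) (A := H) (B := H)).toLinearMap := by
  ext x
  rw [(ℛ k x).convMul_apply]
  simpa using (ℛ k x).eq.symm

lemma convMul_comp_antipode {A : Type*} [Semiring A] [Algebra k A] (f : H →ₐ[k] A) :
    toConv f.toLinearMap * toConv (f.toLinearMap ∘ₗ antipode k) = 1 := by
  have h := algHom_comp_convMul_distrib f (toConv .id) (toConv (antipode k))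
  rw [id_mul_antipode] at h
  ext x
  simpa using congr($h x).symm

lemma comp_antipode_convMul {A : Type*} [Semiring A] [Algebra k A] (f : H →ₐ[k] A) :
    toConv (f.toLinearMap ∘ₗ antipode k) * toConv f.toLinearMap = 1 := by
  have h := algHom_comp_convMul_distrib f (toConv (antipode k)) (toConv .id)
  rw [antipode_mul_id] at h
  ext x
  simpa using congr($h x).symm

lemma sum_comul_mul_one_tmul_antipode {b : H} {ι : Type*} (r : Coalgebra.Repr k b ι) :
    ∑ i ∈ r.index, comul (r.left i) * (1 ⊗ₜ[k] antipode k (r.right i)) = b ⊗ₜ[k] 1 := by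
  have hcomul : toConv comul *
        toConv ((includeRight (R := k) (A := H) (B := H)).toLinearMap ∘ₗ antipode k) =
      toConv (includeLeft (R := k) (S := k) (A := H) (B := H)).toLinearMap := by
    rw [toConv_comul_eq, mul_assoc, convMul_comp_antipode, mul_one]
  simpa [r.convMul_apply] using congr($hcomul b)

lemma sum_antipode_tmul_one_mul_comul {a : H} {ι : Type*} (r : Coalgebra.Repr k a ι) :
    ∑ i ∈ r.index, (antipode k (r.left i) ⊗ₜ[k] 1) * comul (r.right i) = 1 ⊗ₜ[k] a := by
  have hcomul : toConv ((includeLeft (R := k) (S := k) (A := H) (B := H)).toLinearMap ∘ₗ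
        antipode k) * toConv comul =
      toConv (includeRight (R := k) (A := H) (B := H)).toLinearMap := by
    rw [toConv_comul_eq, ← mul_assoc, comp_antipode_convMul, one_mul]
  simpa [r.convMul_apply] using congr($hcomul a)

end Comultiplication

section IntegralsOverSemirings

variable {k H : Type*} [CommSemiring k] [Semiring H] [HopfAlgebra k H] {L : H}

lemma conv_eq_apply_leftSlice (f h : Dual k H) (x : H) :
    conv f h x = h (leftSlice f (comul x)) := by
  rw [conv, LinearMap.comp_apply, LinearMap.comp_apply, ← (ℛ k x).eq]
  simp

lemma conv_eq_apply_rightSlice (f h : Dual k H) (x : H) :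
    conv f h x = f (rightSlice h (comul x)) := by
  rw [conv, LinearMap.comp_apply, LinearMap.comp_apply, ← (ℛ k x).eq]
  simp [mul_comm]

lemma IsRightIntegral.tmul_one_mul_comul (hL : IsRightIntegral k L) (b : H) :
    (L ⊗ₜ[k] 1) * comul b = L ⊗ₜ b := by
  rw [← (ℛ k b).eq]
  simpa [Finset.mul_sum, hL _, -sum_counit_tmul_eq] using
    congr((LinearMap.toSpanSingleton k H L).rTensor H $(sum_counit_tmul_eq (ℛ k b)))

lemma IsLeftIntegral.comul_mul_one_tmul (hL : IsLeftIntegral k L) (a : H) :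
    comul a * (1 ⊗ₜ[k] L) = a ⊗ₜ L := by
  rw [← (ℛ k a).eq]
  simpa [Finset.sum_mul, hL _, -sum_tmul_counit_eq] using
    congr((LinearMap.toSpanSingleton k H L).lTensor H $(sum_tmul_counit_eq (ℛ k a)))

lemma mul'_lTensor_mulRight_comp_antipode_comul (a y : H) :
    LinearMap.mul' k H ((LinearMap.mulRight k y ∘ₗ antipode k).lTensor H (comul a)) =
      counit (R := k) a • y := by
  rw [← (ℛ k a).eq]
  simp [← mul_assoc, ← Finset.sum_mul, sum_mul_antipode_eq_smul]

end IntegralsOverSemirings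

section IntegralsOverFields

variable {k H : Type*} [Field k] [Ring H] [HopfAlgebra k H] {l : Dual k H} {g L : H}

lemma IsRightIntegralDual.leftSlice_comul (hl : IsRightIntegralDual k l) (x : H) :
    leftSlice l (comul x) = l x • 1 := by
  refine sub_eq_zero.1 <| (Module.forall_dual_apply_eq_zero_iff k _).1 fun f ↦ ?_
  rw [map_sub, ← conv_eq_apply_leftSlice, hl f]
  simp [mul_comm]

lemma rightSlice_comul_of_conv_eq (hlg : ∀ f : Dual k H, conv f l = f g • l) (x : H) :
    rightSlice l (comul x) = l x • g := by
  refine sub_eq_zero.1 <| (Module.forall_dual_apply_eq_zero_iff k _).1 fun f ↦ ?_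
  rw [map_sub, ← conv_eq_apply_rightSlice, hlg f]
  simp [mul_comm]

/-- Expand `b ⊗ 1 = Σ Δ(b₁) (1 ⊗ S b₂)` and integrate `Δ (a b₁)`. -/
lemma IsRightIntegralDual.leftSlice_comul_mul_tmul_one (hl : IsRightIntegralDual k l) (a b : H) :
    leftSlice l (comul a * (b ⊗ₜ 1)) = antipode k (leftSlice l ((a ⊗ₜ 1) * comul b)) := by
  calc leftSlice l (comul a * (b ⊗ₜ 1))
    _ = ∑ i ∈ (ℛ k b).index, l (a * (ℛ k b).left i) • antipode k ((ℛ k b).right i) := by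
        simp only [← sum_comul_mul_one_tmul_antipode (ℛ k b), Finset.mul_sum, ← mul_assoc,
          ← Bialgebra.comul_mul, map_sum, leftSlice_mul_one_tmul, hl.leftSlice_comul,
          smul_mul_assoc, one_mul]
    _ = antipode k (leftSlice l ((a ⊗ₜ 1) * comul b)) := by
        conv_rhs => rw [← (ℛ k b).eq]
        simp [Finset.mul_sum]

lemma rightSlice_one_tmul_mul_comul (hlg : ∀ f : Dual k H, conv f l = f g • l) (a b : H) :
    rightSlice l ((1 ⊗ₜ a) * comul b) = antipode k (rightSlice l (comul a * (1 ⊗ₜ b))) * g := by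
  calc rightSlice l ((1 ⊗ₜ a) * comul b)
    _ = ∑ i ∈ (ℛ k a).index, l ((ℛ k a).right i * b) • (antipode k ((ℛ k a).left i) * g) := by
        simp only [← sum_antipode_tmul_one_mul_comul (ℛ k a), Finset.sum_mul, mul_assoc,
          ← Bialgebra.comul_mul, map_sum, rightSlice_tmul_one_mul,
          rightSlice_comul_of_conv_eq hlg, mul_smul_comm]
    _ = antipode k (rightSlice l (comul a * (1 ⊗ₜ b))) * g := by
        conv_rhs => rw [← (ℛ k a).eq]
        simp [Finset.sum_mul]

lemma leftSlice_comul_integral_mul_tmul_one (hl : IsRightIntegralDual k l)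
    (hL : IsRightIntegral k L) (b : H) :
    leftSlice l (comul L * (b ⊗ₜ 1)) = l L • antipode k b := by
  rw [hl.leftSlice_comul_mul_tmul_one, hL.tmul_one_mul_comul, leftSlice_tmul, map_smul]

lemma rightSlice_one_tmul_mul_comul_integral (hlg : ∀ f : Dual k H, conv f l = f g • l)
    (hL : IsLeftIntegral k L) (a : H) :
    rightSlice l ((1 ⊗ₜ a) * comul L) = l L • (antipode k a * g) := by
  rw [rightSlice_one_tmul_mul_comul hlg, hL.comul_mul_one_tmul, rightSlice_tmul, map_smul,
    smul_mul_assoc]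

lemma apply_mul_antipode (hl : IsRightIntegralDual k l)
    (hlg : ∀ f : Dual k H, conv f l = f g • l) (hL : IsLeftIntegral k L)
    (hL' : IsRightIntegral k L) (hlL : l L ≠ 0) (a b : H) :
    l (a * antipode k b) = l (antipode k a * g * b) := by
  have h := apply_mul_leftSlice_mul_tmul_one l l (comul L) a b
  rw [leftSlice_comul_integral_mul_tmul_one hl hL', rightSlice_one_tmul_mul_comul_integral hlg hL,
    mul_smul_comm, smul_mul_assoc, map_smul, map_smul] at h
  exact smul_right_injective k hlL h

lemma IsRightIntegralDual.leftSlice_comul_mul_tmul_one_eq_zero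
    (hl : IsRightIntegralDual k l) {a : H} (ha : ∀ b, l (a * b) = 0) (b : H) :
    leftSlice l (comul a * (b ⊗ₜ 1)) = 0 := by
  rw [hl.leftSlice_comul_mul_tmul_one, ← (ℛ k b).eq]
  simp [Finset.mul_sum, ha]

end IntegralsOverFields

section TraceFormula

variable {k H : Type*} [Field k] [Ring H] [HopfAlgebra k H] {l : Dual k H} {L : H}
  [FiniteDimensional k H]

lemma trace_eq_of_forall_apply_eq_leftSlice (l : Dual k H) {φ ψ : End k H} {X : H ⊗[k] H}
    (hψ : ∀ b, ψ b = φ (leftSlice l (X * (b ⊗ₜ 1)))) :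
    LinearMap.trace k H ψ = l (LinearMap.mul' k H (φ.lTensor H X)) := by
  obtain rfl : ψ = φ ∘ₗ leftSlice l ∘ₗ LinearMap.mulLeft k X ∘ₗ (TensorProduct.mk k H H).flip 1 :=
    LinearMap.ext hψ
  clear hψ
  induction X with
  | zero => simp
  | tmul x y =>
    refine Eq.trans ?_ (LinearMap.trace_smulRight (l ∘ₗ LinearMap.mulLeft k x) (φ y))
    exact congrArg _ (LinearMap.ext fun b ↦ by simp)
  | add X Y hX hY =>
    rw [map_add (LinearMap.lTensor H φ), map_add, map_add, ← hX, ← hY, ← map_add]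
    exact congrArg _ (LinearMap.ext fun b ↦ by simp [add_mul])

lemma mul_trace_mulRight_mul_antipode_sq (hl : IsRightIntegralDual k l)
    (hL : IsRightIntegral k L) (y : H) :
    l L * LinearMap.trace k H (LinearMap.mulRight k y * antipode k ^ 2) =
      counit (R := k) L * l y := by
  calc l L * LinearMap.trace k H (LinearMap.mulRight k y * antipode k ^ 2)
    _ = LinearMap.trace k H (l L • (LinearMap.mulRight k y * antipode k ^ 2)) := by
        rw [map_smul, smul_eq_mul]
    _ = l (LinearMap.mul' k H ((LinearMap.mulRight k y ∘ₗ antipode k).lTensor H (comul L))) :=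
        trace_eq_of_forall_apply_eq_leftSlice l fun b ↦ by
          simp [leftSlice_comul_integral_mul_tmul_one hl hL, pow_two]
    _ = counit (R := k) L * l y := by
        rw [mul'_lTensor_mulRight_comp_antipode_comul, map_smul, smul_eq_mul]

/-- The zero map `b ↦ S(l(a₁ b) a₂) y` has trace `l(a₁ S(a₂) y) = ε(a) l(y)`. -/
lemma IsRightIntegralDual.counit_eq_zero_of_forall_apply_mul_eq_zero
    (hl : IsRightIntegralDual k l) (hl0 : l ≠ 0) {a : H} (ha : ∀ b, l (a * b) = 0) :
    counit (R := k) a = 0 := by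
  obtain ⟨y, hy⟩ := DFunLike.ne_iff.1 hl0
  have htr := trace_eq_of_forall_apply_eq_leftSlice l (ψ := (0 : End k H))
    (φ := LinearMap.mulRight k y ∘ₗ antipode k) (X := comul a) fun b ↦ by
      simp [hl.leftSlice_comul_mul_tmul_one_eq_zero ha]
  rw [mul'_lTensor_mulRight_comp_antipode_comul, map_smul, smul_eq_mul, map_zero] at htr
  exact (mul_eq_zero.1 htr.symm).resolve_right hy

/-- Every `a₁ f(a₂)` also satisfies the hypothesis on `a`, so `f(a) = ε(a₁ f(a₂))` vanishes. -/
lemma IsRightIntegralDual.eq_zero_of_forall_apply_mul_eq_zero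
    (hl : IsRightIntegralDual k l) (hl0 : l ≠ 0) {a : H} (ha : ∀ b, l (a * b) = 0) : a = 0 := by
  refine (Module.forall_dual_apply_eq_zero_iff k a).1 fun f ↦ ?_
  have hslice (m : Dual k H) (b : H) :
      m (rightSlice f (comul a) * b) = f (leftSlice m (comul a * (b ⊗ₜ 1))) := by
    simpa [← Algebra.TensorProduct.one_def] using
      (apply_mul_leftSlice_mul_tmul_one m f (comul a) 1 b).symm
  have hcounit := hl.counit_eq_zero_of_forall_apply_mul_eq_zero hl0
    (a := rightSlice f (comul a)) fun b ↦ by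
      rw [hslice, hl.leftSlice_comul_mul_tmul_one_eq_zero ha, map_zero]
  rw [← mul_one (rightSlice f (comul a)), hslice] at hcounit
  simpa [leftSlice, ← Algebra.TensorProduct.one_def] using hcounit

lemma IsRightIntegralDual.apply_ne_zero
    (hl : IsRightIntegralDual k l) (hl0 : l ≠ 0) (hL : IsRightIntegral k L) (hL0 : L ≠ 0) :
    l L ≠ 0 := by
  contrapose! hL0
  exact hl.eq_zero_of_forall_apply_mul_eq_zero hl0 fun b ↦ by simp [hL b, hL0]

end TraceFormula

section GroupLikeElements

variable {k H : Type*} [Field k] [Ring H] [HopfAlgebra k H] {l : Dual k H} {g L : H}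

lemma IsGroupLike.isGroupLikeElem_s9 (hg : IsGroupLike k g) : IsGroupLikeElem k g where
  counit_eq_one := by
    have h : counit (R := k) g • g = g := by
      simpa [hg.2] using congr(TensorProduct.lid k H $(rTensor_counit_comul (R := k) g))
    exact smul_left_injective k hg.1 (h.trans (one_smul k g).symm)
  comul_eq_tmul_self := hg.2

lemma apply_eq_zero_of_isGroupLikeElem (hl : IsRightIntegralDual k l)
    (hlg : ∀ f : Dual k H, conv f l = f g • l) (hg : g ≠ 1) {y : H} (hy : IsGroupLikeElem k y) :
    l y = 0 := by
  have hleft := hl.leftSlice_comul y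
  have hright := rightSlice_comul_of_conv_eq hlg y
  rw [hy.comul_eq_tmul_self, leftSlice_tmul] at hleft
  rw [hy.comul_eq_tmul_self, rightSlice_tmul, hleft] at hright
  contrapose! hg
  exact (smul_right_injective H hg hright).symm

lemma trace_antipode_sq_mul_mulRight_pow_eq_zero [FiniteDimensional k H]
    (hl : IsRightIntegralDual k l) (hlg : ∀ f : Dual k H, conv f l = f g • l)
    (hg : IsGroupLikeElem k g) (hg1 : g ≠ 1) (hL : IsRightIntegral k L) (hlL : l L ≠ 0) (n : ℕ) :
    LinearMap.trace k H (antipode k ^ 2 * LinearMap.mulRight k g ^ n) = 0 := by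
  have h := mul_trace_mulRight_mul_antipode_sq hl hL (g ^ n)
  rw [apply_eq_zero_of_isGroupLikeElem hl hlg hg1 hg.pow, mul_zero] at h
  rw [LinearMap.pow_mulRight, LinearMap.trace_mul_comm]
  exact (mul_eq_zero.1 h).resolve_left hlL

end GroupLikeElements

section RadfordFormula

variable {k H : Type*} [CommSemiring k] [Semiring H] [HopfAlgebra k H] {l : Dual k H} {g : H}

lemma apply_mul_comm_antipode_sq (hg : IsGroupLikeElem k g)
    (hlS : ∀ a b, l (a * antipode k b) = l (antipode k a * g * b)) (x a : H) :
    l (x * a) = l (antipode k (antipode k a) * x) := by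
  obtain ⟨y, rfl⟩ : ∃ y, g * y = x :=
    ⟨antipode k g * x, by rw [← mul_assoc, hg.mul_antipode_cancel, one_mul]⟩
  calc l (g * y * a)
    _ = l (antipode k (y * a)) := by simpa [mul_assoc] using (hlS 1 (y * a)).symm
    _ = l (antipode k (antipode k a) * (g * y)) := by
        rw [antipode_mul_antidistrib, hlS, mul_assoc]

lemma apply_antipode_pow_four_mul_mul (hg : IsGroupLikeElem k g)
    (hlS : ∀ a b, l (a * antipode k b) = l (antipode k a * g * b)) (a b : H) :
    l ((antipode k ^ 4 : End k H) b * g * a) = l (g * b * a) := by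
  have hSg (x : H) : l (antipode k x) = l (g * x) := by simpa using hlS 1 x
  calc l ((antipode k ^ 4 : End k H) b * g * a)
    _ = l (g * a * antipode k (antipode k b)) := by
        rw [mul_assoc]
        exact (apply_mul_comm_antipode_sq hg hlS _ _).symm
    _ = l (antipode k (antipode k (antipode k b)) * antipode k a) := by
        rw [mul_assoc, ← hSg, antipode_mul_antidistrib]
    _ = l (antipode k (b * a)) := by
        rw [← apply_mul_comm_antipode_sq hg hlS, ← antipode_mul_antidistrib]
    _ = l (g * b * a) := by rw [hSg, mul_assoc]

lemma antipode_pow_four_apply_mul {k H : Type*} [Field k] [Ring H]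
    [HopfAlgebra k H] [FiniteDimensional k H] {l : Dual k H} {g : H}
    (hl : IsRightIntegralDual k l) (hl0 : l ≠ 0) (hg : IsGroupLikeElem k g)
    (hlS : ∀ a b, l (a * antipode k b) = l (antipode k a * g * b)) (b : H) :
    (antipode k ^ 4 : End k H) b * g = g * b :=
  sub_eq_zero.1 <| hl.eq_zero_of_forall_apply_mul_eq_zero hl0 fun a ↦ by
    rw [sub_mul, map_sub, apply_antipode_pow_four_mul_mul hg hlS, sub_self]

end RadfordFormula

section AntipodeEigenspaces

variable {k H : Type*} [CommRing k] [Ring H] [HopfAlgebra k H] {g : H}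

lemma commute_antipode_sq_mulRight_s9 (hg : IsGroupLikeElem k g) :
    Commute (antipode k ^ 2 : End k H) (LinearMap.mulRight k g) := by
  ext u
  simp [pow_two, antipode_mul_antidistrib, hg.antipode_antipode]

/-- The subspace of all `u` with `S² u = μ u` and `u g = ν u`, so that `H^ω_{a,i,j}` is the
subspace for `μ = (-1)^a ω^i` and `ν = ω^j`. -/
noncomputable def antipodeSqEigenspace (g : H) (μ ν : k) : Submodule k H :=
  End.eigenspace (antipode k ^ 2) μ ⊓ End.eigenspace (LinearMap.mulRight k g) ν

lemma mem_antipodeSqEigenspace {μ ν : k} {u : H} :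
    u ∈ antipodeSqEigenspace g μ ν ↔ antipode k (antipode k u) = μ • u ∧ u * g = ν • u := by
  simp [antipodeSqEigenspace, pow_two]

lemma antipode_mem_antipodeSqEigenspace (hg : IsGroupLikeElem k g)
    (hS4 : ∀ b, (antipode k ^ 4 : End k H) b * g = g * b) {μ ν ν' : k} (hμ : μ ^ 2 * ν * ν' = 1)
    {u : H} (hu : u ∈ antipodeSqEigenspace g μ ν) :
    antipode k u ∈ antipodeSqEigenspace g μ ν' := by
  rw [mem_antipodeSqEigenspace] at hu ⊢
  obtain ⟨hSu, hug⟩ := hu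
  have hleft : antipode k u = ν • (g * antipode k u) := by
    rw [← mul_smul_comm, ← map_smul, ← hug, antipode_mul_antidistrib, ← mul_assoc,
      hg.mul_antipode_cancel, one_mul]
  have hright : g * antipode k u = μ ^ 2 • (antipode k u * g) := by
    rw [← hS4, ← smul_mul_assoc]
    simp [pow_succ, hSu, smul_smul]
  refine ⟨by rw [hSu, map_smul], ?_⟩
  calc antipode k u * g
    _ = (ν' * (ν * μ ^ 2)) • (antipode k u * g) := by
        rw [← mul_comm (ν * μ ^ 2), mul_comm ν, hμ, one_smul]
    _ = ν' • antipode k u := by rw [mul_smul, mul_smul, ← hright, ← hleft]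

lemma finrank_antipodeSqEigenspace_le {k H : Type*} [Field k] [Ring H]
    [HopfAlgebra k H] [FiniteDimensional k H] {g : H} (hg : IsGroupLikeElem k g)
    (hS4 : ∀ b, (antipode k ^ 4 : End k H) b * g = g * b) {μ ν ν' : k}
    (hμ : μ ^ 2 * ν * ν' = 1) :
    finrank k (antipodeSqEigenspace g μ ν) ≤ finrank k (antipodeSqEigenspace g μ ν') := by
  have hμ0 : μ ≠ 0 := by
    rintro rfl
    simp at hμ
  refine LinearMap.finrank_le_finrank_of_injective (f := (antipode k).restrict fun u hu ↦
    antipode_mem_antipodeSqEigenspace hg hS4 hμ hu) ?_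
  refine (injective_iff_map_eq_zero _).2 fun u hu ↦ Subtype.ext ?_
  have hSu : antipode k (u : H) = 0 := congr_arg Subtype.val hu
  have hμu := (mem_antipodeSqEigenspace.1 u.2).1
  rw [hSu, map_zero] at hμu
  exact (smul_eq_zero.1 hμu.symm).resolve_left hμ0

lemma finrank_antipodeSqEigenspace_eq {k H : Type*} [Field k] [Ring H]
    [HopfAlgebra k H] [FiniteDimensional k H] {g : H} (hg : IsGroupLikeElem k g)
    (hS4 : ∀ b, (antipode k ^ 4 : End k H) b * g = g * b) {μ ν ν' : k}
    (hμ : μ ^ 2 * ν * ν' = 1) :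
    finrank k (antipodeSqEigenspace g μ ν) = finrank k (antipodeSqEigenspace g μ ν') :=
  (finrank_antipodeSqEigenspace_le hg hS4 hμ).antisymm <|
    finrank_antipodeSqEigenspace_le hg hS4 (by rw [mul_right_comm, hμ])

end AntipodeEigenspaces

section SignedDimension

variable {k H : Type*} [Field k] [Ring H] [HopfAlgebra k H] [FiniteDimensional k H] {g : H} {ω : k}

/-- The integer `dim H^ω_{0,i,j} − dim H^ω_{1,i,j}`. -/
noncomputable def hopfSignedDim (g : H) (ω : k) {n : ℕ} (i j : ZMod n) : ℤ :=
  finrank k (hopfEigenspace g ω ((0 : ZMod 2), i, j)) -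
    finrank k (hopfEigenspace g ω ((1 : ZMod 2), i, j))

lemma finrank_hopfEigenspace_reflect (hg : IsGroupLikeElem k g)
    (hS4 : ∀ b, (antipode k ^ 4 : End k H) b * g = g * b) {n : ℕ} [NeZero n] (hω : ω ^ n = 1)
    (a : ZMod 2) (i j : ZMod n) :
    finrank k (hopfEigenspace g ω (a, i, j)) =
      finrank k (hopfEigenspace g ω (a, i, -(i + i + j))) := by
  refine finrank_antipodeSqEigenspace_eq hg hS4 ?_
  have hψ : ω ^ i.val * ω ^ i.val * ω ^ j.val * ω ^ (-(i + i + j)).val = 1 := by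
    let ψ := AddChar.zmodChar n hω
    have h : ψ i * ψ i * ψ j * ψ (-(i + i + j)) = 1 := by
      rw [← ψ.map_add_eq_mul, ← ψ.map_add_eq_mul, ← ψ.map_add_eq_mul, add_neg_cancel,
        ψ.map_zero_eq_one]
    simpa only [ψ, AddChar.zmodChar_apply] using h
  rw [mul_pow, pow_right_comm, neg_one_sq, one_pow, one_mul, pow_two, hψ]

lemma hopfSignedDim_reflect (hg : IsGroupLikeElem k g)
    (hS4 : ∀ b, (antipode k ^ 4 : End k H) b * g = g * b) {n : ℕ} [NeZero n] (hω : ω ^ n = 1)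
    (i j : ZMod n) : hopfSignedDim g ω i j = hopfSignedDim g ω i (-(i + i + j)) :=
  congrArg₂ (fun a b : ℕ ↦ (a - b : ℤ)) (finrank_hopfEigenspace_reflect hg hS4 hω 0 i j)
    (finrank_hopfEigenspace_reflect hg hS4 hω 1 i j)

lemma sum_finrank_hopfEigenspace_mul_eq_zero [CharZero k] {n : ℕ} [NeZero n] (hn : Odd n)
    (hω : IsPrimitiveRoot ω n) (hg : IsGroupLikeElem k g)
    (hS : (antipode k : End k H) ^ (4 * n) = 1) (hgn : g ^ n = 1)
    (htr : ∀ m : ℕ, LinearMap.trace k H (antipode k ^ 2 * LinearMap.mulRight k g ^ m) = 0)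
    (j : ZMod n) :
    ∑ t : ZMod 2 × ZMod n, (finrank k (hopfEigenspace g ω (t.1, t.2, j)) : k) *
      ((-1) ^ t.1.val * ω ^ t.2.val) = 0 := by
  have hS2 : (antipode k ^ 2 : End k H) ^ Fintype.card (ZMod 2 × ZMod n) = 1 := by
    rw [Fintype.card_prod, ZMod.card, ZMod.card, ← pow_mul, ← hS]
    congr 1
    ring
  have hR : (LinearMap.mulRight k g : End k H) ^ Fintype.card (ZMod n) = 1 := by
    rw [ZMod.card, LinearMap.pow_mulRight, hgn, LinearMap.mulRight_one]
    rfl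
  have hμ := injective_neg_one_pow_val_mul_pow_val hn hω
  have hν := injective_pow_val hω
  refine sum_finrank_eigenspace_inf_mul_eq_zero (commute_antipode_sq_mulRight_s9 hg) htr hμ
    (aeval_nodal_univ_eq_zero hμ (fun t ↦ ?_) hS2) hν
    (aeval_nodal_univ_eq_zero hν (fun i ↦ ?_) hR) j
  · rw [Fintype.card_prod, ZMod.card, ZMod.card]
    exact neg_one_pow_mul_pow_pow_two_mul_s9 hω.pow_eq_one _ _
  · rw [ZMod.card, pow_right_comm, hω.pow_eq_one, one_pow]

lemma sum_hopfSignedDim_mul_pow_eq_zero [CharZero k] {n : ℕ} [NeZero n] (hn : Odd n)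
    (hω : IsPrimitiveRoot ω n) (hg : IsGroupLikeElem k g)
    (hS : (antipode k : End k H) ^ (4 * n) = 1) (hgn : g ^ n = 1)
    (htr : ∀ m : ℕ, LinearMap.trace k H (antipode k ^ 2 * LinearMap.mulRight k g ^ m) = 0)
    (j : ZMod n) : ∑ i, (hopfSignedDim g ω i j : k) * ω ^ i.val = 0 := by
  have hsum := sum_finrank_hopfEigenspace_mul_eq_zero hn hω hg hS hgn htr j
  have hsign (F : ZMod 2 → k) : ∑ a, F a = F 0 + F 1 := Fin.sum_univ_two F
  rw [Fintype.sum_prod_type, hsign, ← Finset.sum_add_distrib] at hsum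
  rw [← hsum]
  refine Finset.sum_congr rfl fun i _ ↦ ?_
  rw [ZMod.val_zero, ZMod.val_one, hopfSignedDim]
  push_cast
  ring

lemma hopfSignedDim_eq_hopfSignedDim_zero_zero [CharZero k] {p : ℕ} [Fact p.Prime] (hp : Odd p)
    (hω : IsPrimitiveRoot ω p) (hg : IsGroupLikeElem k g)
    (hS : (antipode k : End k H) ^ (4 * p) = 1) (hgp : g ^ p = 1)
    (htr : ∀ m : ℕ, LinearMap.trace k H (antipode k ^ 2 * LinearMap.mulRight k g ^ m) = 0)
    (hS4 : ∀ b, (antipode k ^ 4 : End k H) b * g = g * b) (i j : ZMod p) :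
    hopfSignedDim g ω i j = hopfSignedDim g ω 0 (0 : ZMod p) := by
  have hcongr (j i i' : ZMod p) : hopfSignedDim g ω i j = hopfSignedDim g ω i' j :=
    eq_of_sum_intCast_mul_pow_eq_zero (a := (hopfSignedDim g ω · j)) hω
      (sum_hopfSignedDim_mul_pow_eq_zero hp hω hg hS hgp htr j) i i'
  obtain ⟨i₀, hi₀⟩ : ∃ i₀ : ZMod p, -(i₀ + i₀ + j) = 0 := by
    obtain ⟨m, hm⟩ := hp
    have hp0 : (2 * m + 1 : ZMod p) = 0 := by simpa using congr(($hm : ZMod p)).symm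
    exact ⟨m * j, by linear_combination -j * hp0⟩
  calc hopfSignedDim g ω i j
    _ = hopfSignedDim g ω i₀ j := hcongr j i i₀
    _ = hopfSignedDim g ω i₀ 0 := by rw [hopfSignedDim_reflect hg hS4 hω.pow_eq_one, hi₀]
    _ = hopfSignedDim g ω 0 0 := hcongr 0 i₀ 0

end SignedDimension

theorem stmt9_general (k : Type*) [Field k] [CharZero k]
    (p : ℕ) (hp : p.Prime) (hpodd : Odd p)
    (H : Type*) [Ring H] [HopfAlgebra k H] [FiniteDimensional k H]
    (g : H) (hg : IsDistinguishedGroupLike k g) (hg1 : g ≠ 1) (hidx : IsHopfIndex k g p)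
    (huni : IsDistinguishedGroupLikeDual k (Bialgebra.counitAlgHom k H))
    (ω : k) (hω : IsPrimitiveRoot ω p) :
    ∃ d : ℤ, ∀ i j : ZMod p,
      (Module.finrank k (hopfEigenspace g ω ((0 : ZMod 2), i, j)) : ℤ) -
        (Module.finrank k (hopfEigenspace g ω ((1 : ZMod 2), i, j)) : ℤ) = d := by
  have : Fact p.Prime := ⟨hp⟩
  obtain ⟨hgl, l, hl0, hl, hlg⟩ := hg
  obtain ⟨L, hL0, hL, hLε⟩ := huni
  obtain ⟨-, hS, hgp, -⟩ := hidx
  have hL' : IsRightIntegral k L := hLε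
  replace hgl := hgl.isGroupLikeElem_s9
  have hlL : l L ≠ 0 := hl.apply_ne_zero hl0 hL' hL0
  have hS4 (b : H) : (antipode k ^ 4 : End k H) b * g = g * b :=
    antipode_pow_four_apply_mul hl hl0 hgl (apply_mul_antipode hl hlg hL hL' hlL) b
  have htr (m : ℕ) : LinearMap.trace k H (antipode k ^ 2 * LinearMap.mulRight k g ^ m) = 0 :=
    trace_antipode_sq_mul_mulRight_pow_eq_zero hl hlg hgl hg1 hL' hlL m
  exact ⟨hopfSignedDim g ω 0 (0 : ZMod p),
    hopfSignedDim_eq_hopfSignedDim_zero_zero hpodd hω hgl hS hgp htr hS4⟩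

/-- Lemma 5.7(i). Let `p` be an odd prime, `H` a Hopf algebra of index `p`
over an algebraically closed field of characteristic `0` such that `H` is unimodular (the
distinguished group-like element of `H*` is the counit) and `H*` is not unimodular (the
distinguished group-like element `g` of `H` is `≠ 1`), and `ω` a primitive `p`-th root of
unity. Then there is a single integer `d` with
`dim H^ω_{0,i,j} − dim H^ω_{1,i,j} = d` for all `i, j ∈ ℤ/p`. -/
theorem stmt9 (k : Type*) [Field k] [IsAlgClosed k] [CharZero k]
    (p : ℕ) (hp : p.Prime) (hpodd : Odd p)
    (H : Type*) [Ring H] [HopfAlgebra k H] [FiniteDimensional k H]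
    (g : H) (hg : IsDistinguishedGroupLike k g) (hg1 : g ≠ 1) (hidx : IsHopfIndex k g p)
    (huni : IsDistinguishedGroupLikeDual k (Bialgebra.counitAlgHom k H))
    (ω : k) (hω : IsPrimitiveRoot ω p) :
    ∃ d : ℤ, ∀ i j : ZMod p,
      (Module.finrank k (hopfEigenspace g ω ((0 : ZMod 2), i, j)) : ℤ) -
        (Module.finrank k (hopfEigenspace g ω ((1 : ZMod 2), i, j)) : ℤ) = d := by
  exact stmt9_general k p hp hpodd H g hg hg1 hidx huni ω hω
end
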